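/- arXiv:2302.05590 — 7 statements merged into one kernel-verified Lean document; each statement's English description precedes it below -/
import Mathlib

section
/- For all prices s¹, s² with 0 ≤ s¹ and 0 ≤ s², the two-tier pricing mechanism is incentive compatible if and only if s¹ ≤ s². -/
/-- Allocation probability of the two-tier pricing mechanism with prices `s1 ≤? s2`,
on report `t`. -/
noncomputable def twoTierAlloc (s1 s2 t : ℝ) : ℝ :=
  if t / 2 < s1 then 0 else if t / 2 < s2 then 1 / 2 else 1

/-- Payment of the two-tier pricing mechanism on report `t`. -/
noncomputable def twoTierPay (s1 s2 t : ℝ) : ℝ :=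
  if t / 2 < s1 then 0 else if t / 2 < s2 then s1 else s1 + s2

/-- Expected utility of a risk-neutral buyer with value `v` reporting `t`. -/
noncomputable def twoTierUtility (s1 s2 v t : ℝ) : ℝ :=
  twoTierAlloc s1 s2 t * v - twoTierPay s1 s2 t

/-- The two-tier pricing mechanism is incentive compatible iff `s1 ≤ s2`. -/
theorem twoTier_ic_iff (s1 s2 : ℝ) (hs1 : 0 ≤ s1) (hs2 : 0 ≤ s2) :
    (∀ v t : ℝ, 0 ≤ v → 0 ≤ t →
      twoTierUtility s1 s2 v t ≤ twoTierUtility s1 s2 v v) ↔ s1 ≤ s2 := by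
  constructor
  · intro h
    by_contra hlt
    push Not at hlt
    have h1 := h ((3 * s1 + s2) / 2) (2 * s1) (by linarith) (by linarith)
    unfold twoTierUtility twoTierAlloc twoTierPay at h1
    have a1 : ¬ (2 * s1 / 2 < s1) := by linarith
    have a2 : ¬ (2 * s1 / 2 < s2) := by linarith
    have a3 : (3 * s1 + s2) / 2 / 2 < s1 := by linarith
    rw [if_neg a1, if_neg a2, if_neg a1, if_neg a2, if_pos a3, if_pos a3] at h1
    linarith
  · intro h v t hv ht
    unfold twoTierUtility twoTierAlloc twoTierPay
    split_ifs <;> linarith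
end

section
/- Suppose some valuation is not identically zero, i.e., t_{i₀}(y') > 0 for some player i₀ and some y' ∈ Y. Then for every weight vector w, letting y be the selected outcome and s¹,…,sⁿ the transfers of the weighted Groves mechanism, we have s^k − t_k(y) ≠ 0 for every player k, and w_i = (1/(s^i − t_i(y))) / (Σ_{k=1}^n 1/(s^k − t_k(y))) for every player i; in particular, the weight vector w is uniquely determined by the outcome (y; s¹,…,sⁿ) and the valuations. -/
/-- Identifiability of the weights of the weighted Groves mechanism from a single
outcome: if some valuation is not identically zero, then for the welfare-maximizing
outcome `y` and the Groves transfers `s`, every `s k - t k y` is nonzero and each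
weight `w i` equals `(1 / (s i - t i y)) / ∑ k, 1 / (s k - t k y)`; in particular
the weight vector is uniquely determined by the outcome and the valuations. -/
theorem weightedGroves_weights_identifiable
    {n : ℕ} (hn : 1 ≤ n) {Y : Type} [Fintype Y] [Nonempty Y]
    (t : Fin n → Y → ℝ) (ht : ∀ i y, 0 ≤ t i y)
    (hne : ∃ i₀ : Fin n, ∃ y' : Y, 0 < t i₀ y')
    (w : Fin n → ℝ) (hw : ∀ i, 0 < w i) (hwsum : ∑ i, w i = 1)
    (y : Y) (hy : ∀ y' : Y, ∑ i, w i * t i y' ≤ ∑ i, w i * t i y)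
    (s : Fin n → ℝ)
    (hs : ∀ i, s i = -(1 / w i) * ∑ j ∈ Finset.univ.erase i, w j * t j y) :
    (∀ k, s k - t k y ≠ 0) ∧
    (∀ i, w i = (1 / (s i - t i y)) / ∑ k, 1 / (s k - t k y)) := by
  obtain ⟨i₀, y', hpos⟩ := hne
  have hW : 0 < ∑ i, w i * t i y := by
    refine lt_of_lt_of_le ?_ (hy y')
    exact Finset.sum_pos' (fun i _ => mul_nonneg (hw i).le (ht i y'))
      ⟨i₀, Finset.mem_univ _, mul_pos (hw i₀) hpos⟩
  have key : ∀ k, s k - t k y = -(∑ i, w i * t i y) / w k := by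
    intro k
    have hk := (hw k).ne'
    have h := Finset.add_sum_erase Finset.univ (fun j => w j * t j y) (Finset.mem_univ k)
    rw [hs k, ← h]
    field_simp
    ring
  have inv : ∀ k, 1 / (s k - t k y) = w k * (-(1 / ∑ i, w i * t i y)) := by
    intro k
    have hk := (hw k).ne'
    rw [key k]
    generalize (∑ i, w i * t i y) = W at hW
    have := hW.ne'
    field_simp
  refine ⟨fun k => ?_, fun i => ?_⟩
  · rw [key k]
    exact div_ne_zero (neg_ne_zero.mpr hW.ne') (hw k).ne'
  · simp only [inv]
    rw [← Finset.sum_mul, hwsum, one_mul, mul_div_assoc, div_self, mul_one]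
    exact neg_ne_zero.mpr (one_div_ne_zero hW.ne')
end

section
/- (Knowledge extraction for the Schnorr protocol.) Let G be a finite group of prime order p, let g, a, α ∈ G, and let β, β', γ, γ' ∈ ZMod p with β ≠ β'. If g^γ = α·a^β and g^(γ') = α·a^(β'), then a = g^((γ − γ')·(β − β')⁻¹). -/
/-- Knowledge extraction for the Schnorr protocol: from two accepting transcripts
`(α, β, γ)` and `(α, β', γ')` with the same first message and distinct challenges
`β ≠ β'`, the discrete logarithm of `a` base `g` can be computed:
`a = g ^ ((γ - γ') * (β - β')⁻¹).val`. -/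
theorem schnorr_knowledge_extraction
    {G : Type} [Group G] [Fintype G] (p : ℕ) [Fact p.Prime]
    (hG : Fintype.card G = p) (g a α : G)
    (β β' γ γ' : ZMod p) (hββ' : β ≠ β')
    (h1 : g ^ γ.val = α * a ^ β.val)
    (h2 : g ^ γ'.val = α * a ^ β'.val) :
    a = g ^ ((γ - γ') * (β - β')⁻¹).val := by
  have hp : ∀ u : G, u ^ p = 1 := fun u => hG ▸ pow_card_eq_one
  have hmod : ∀ (u : G) (n : ℕ), u ^ (n % p) = u ^ n := fun u n => by
    conv_rhs => rw [← Nat.mod_add_div n p, pow_add, pow_mul, hp, one_pow, mul_one]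
  have hadd : ∀ (u : G) (x y : ZMod p), u ^ (x + y).val = u ^ x.val * u ^ y.val :=
    fun u x y => by rw [ZMod.val_add, hmod, pow_add]
  have hmul : ∀ (u : G) (x y : ZMod p), u ^ (x * y).val = (u ^ x.val) ^ y.val :=
    fun u x y => by rw [ZMod.val_mul, hmod, pow_mul]
  have key : g ^ (γ - γ').val = a ^ (β - β').val := by
    have e1 := hadd g γ' (γ - γ')
    have e2 := hadd a β' (β - β')
    rw [add_sub_cancel] at e1 e2
    rw [h1, h2, e2, ← mul_assoc] at e1
    exact (mul_left_cancel e1).symm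
  rw [hmul, key, ← hmul, mul_inv_cancel₀ (sub_ne_zero.mpr hββ'), ZMod.val_one, pow_one]
end

section
/- (Honest-verifier zero knowledge for the Schnorr protocol.) Let G be a finite group of prime order p, let g ∈ G with g ≠ 1, let r ∈ ZMod p, and set a = g^r. Then the following two PMFs on G × ZMod p × ZMod p are equal: the real transcript distribution, which draws s and β independently and uniformly from ZMod p and outputs (g^s, β, s + β·r); and the simulated transcript distribution, which draws β and γ independently and uniformly from ZMod p and outputs (g^γ·(a^β)⁻¹, β, γ). -/
/-- Honest-verifier zero knowledge for the Schnorr protocol: the real transcript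
distribution (draw `s` and `β` independently and uniformly, output
`(g ^ s, β, s + β * r)`) is equal, as a PMF on `G × ZMod p × ZMod p`, to the
simulated transcript distribution (draw `β` and `γ` independently and uniformly,
output `(g ^ γ * (a ^ β)⁻¹, β, γ)`), where `a = g ^ r`. -/
theorem schnorr_hvzk
    {G : Type} [Group G] [Fintype G] (p : ℕ) [Fact p.Prime]
    (hG : Fintype.card G = p) (g : G) (hg : g ≠ 1)
    (r : ZMod p) (a : G) (ha : a = g ^ r.val) :
    ((PMF.uniformOfFintype (ZMod p)).bind fun s =>
        (PMF.uniformOfFintype (ZMod p)).map fun β =>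
          ((g ^ s.val, β, s + β * r) : G × ZMod p × ZMod p))
      =
    ((PMF.uniformOfFintype (ZMod p)).bind fun β =>
        (PMF.uniformOfFintype (ZMod p)).map fun γ =>
          ((g ^ γ.val * (a ^ β.val)⁻¹, β, γ) : G × ZMod p × ZMod p)) := by
  have hp : g ^ p = 1 := by rw [← hG]; exact pow_card_eq_one
  have key : ∀ m n : ℕ, (m : ZMod p) = n → g ^ m = g ^ n := by
    intro m n h
    rw [ZMod.natCast_eq_natCast_iff] at h
    exact pow_eq_pow_iff_modEq.2 (h.of_dvd (orderOf_dvd_of_pow_eq_one hp))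
  have hunif : ∀ c : ZMod p, (PMF.uniformOfFintype (ZMod p)).map (fun s => s + c)
      = PMF.uniformOfFintype (ZMod p) := by
    intro c
    ext x
    rw [PMF.map_apply, tsum_eq_single (x - c)]
    · simp
    · intro b hb
      rw [if_neg]
      intro h
      exact hb (by rw [h]; ring)
  simp only [PMF.map, Function.comp_def]
  rw [PMF.bind_comm]
  congr 1
  funext β
  conv_rhs => rw [← hunif (β * r)]
  rw [PMF.bind_map]
  congr 1
  funext s
  simp only [Function.comp_def]
  congr 2
  rw [eq_mul_inv_iff_mul_eq, ha, ← pow_mul, ← pow_add]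
  apply key
  simp [mul_comm]
end

section
/- (Knowledge extraction for the Cramer–Damgård–Schoenmakers protocol.) Let G be a finite group of prime order p, let g ∈ G, let k ≥ 1, and let a, α : Fin k → G. Let β, β' ∈ ZMod p with β ≠ β', and let β_i, γ_i, β'_i, γ'_i ∈ ZMod p (for i ∈ Fin k) satisfy Σ_i β_i = β, Σ_i β'_i = β', and, for every i, g^(γ_i) = α_i·(a_i)^(β_i) and g^(γ'_i) = α_i·(a_i)^(β'_i). Then there exists i with β_i ≠ β'_i such that a_i = g^((γ_i − γ'_i)·(β_i − β'_i)⁻¹). -/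
/-- Knowledge extraction for the Cramer–Damgård–Schoenmakers protocol: from two
accepting transcripts with the same first message `α` and distinct master challenges
`β ≠ β'`, there exists an index `i` with `βi i ≠ βi' i`, and for this index the
discrete logarithm of `a i` base `g` can be computed:
`a i = g ^ ((γi i - γi' i) * (βi i - βi' i)⁻¹).val`. -/
theorem cds_knowledge_extraction
    {G : Type} [Group G] [Fintype G] (p : ℕ) [Fact p.Prime]
    (hG : Fintype.card G = p) (g : G) (k : ℕ) (hk : 1 ≤ k)
    (a α : Fin k → G) (β β' : ZMod p) (hββ' : β ≠ β')
    (βi γi βi' γi' : Fin k → ZMod p)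
    (hsum : ∑ i, βi i = β) (hsum' : ∑ i, βi' i = β')
    (h1 : ∀ i, g ^ (γi i).val = α i * (a i) ^ (βi i).val)
    (h2 : ∀ i, g ^ (γi' i).val = α i * (a i) ^ (βi' i).val) :
    ∃ i, βi i ≠ βi' i ∧ a i = g ^ ((γi i - γi' i) * (βi i - βi' i)⁻¹).val := by
  have hu : ∀ u : G, u ^ p = 1 := fun u => by rw [← hG]; exact pow_card_eq_one
  have hmod : ∀ (u : G) (n : ℕ), u ^ (n % p) = u ^ n := fun u n => by
    conv_rhs => rw [← Nat.mod_add_div n p, pow_add, pow_mul, hu, one_pow, mul_one]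
  have hadd : ∀ (u : G) (x y : ZMod p), u ^ (x + y).val = u ^ x.val * u ^ y.val := fun u x y => by
    rw [ZMod.val_add, hmod, pow_add]
  have hmul : ∀ (u : G) (x y : ZMod p), u ^ (x * y).val = (u ^ x.val) ^ y.val := fun u x y => by
    rw [ZMod.val_mul, hmod, pow_mul]
  have hex : ∃ i, βi i ≠ βi' i := by
    by_contra hc
    push Not at hc
    exact hββ' (by rw [← hsum, ← hsum']; exact Finset.sum_congr rfl fun i _ => hc i)
  obtain ⟨i, hi⟩ := hex
  refine ⟨i, hi, ?_⟩
  have key : g ^ (γi i - γi' i).val = a i ^ (βi i - βi' i).val := by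
    have e1 := hadd g (γi' i) (γi i - γi' i)
    have e2 := hadd (a i) (βi' i) (βi i - βi' i)
    rw [add_sub_cancel] at e1 e2
    have h := h1 i
    rw [e1, e2, h2 i, mul_assoc] at h
    exact mul_left_cancel (mul_left_cancel h)
  haveI : Fact (1 < p) := ⟨(Fact.out : p.Prime).one_lt⟩
  rw [hmul, key, ← hmul, mul_inv_cancel₀ (sub_ne_zero.mpr hi), ZMod.val_one, pow_one]
end

section
/- (Knowledge extraction for the extended Cramer–Damgård–Schoenmakers protocol.) Let G be a finite group of prime order p, let k, m ≥ 1, and let g, a, α : Fin k → Fin m → G. Let β, β' ∈ ZMod p with β ≠ β', and let β_i, β'_i ∈ ZMod p (for i ∈ Fin k) and γ_{i,j}, γ'_{i,j} ∈ ZMod p (for i ∈ Fin k, j ∈ Fin m) satisfy Σ_i β_i = β, Σ_i β'_i = β', and, for every i and j, (g_{i,j})^(γ_{i,j}) = α_{i,j}·(a_{i,j})^(β_i) and (g_{i,j})^(γ'_{i,j}) = α_{i,j}·(a_{i,j})^(β'_i). Then there exists i with β_i ≠ β'_i such that for every j, a_{i,j} = (g_{i,j})^((γ_{i,j} − γ'_{i,j})·(β_i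 − β'_i)⁻¹). -/
/-- Knowledge extraction for the extended Cramer–Damgård–Schoenmakers protocol:
from two accepting transcripts with the same first message `α` and distinct master
challenges `β ≠ β'`, there exists an index `i` with `βi i ≠ βi' i` such that for
every `j`, the discrete logarithm of `a i j` base `g i j` can be computed:
`a i j = (g i j) ^ ((γ i j - γ' i j) * (βi i - βi' i)⁻¹).val`. -/
theorem cds_extended_knowledge_extraction
    {G : Type} [Group G] [Fintype G] (p : ℕ) [Fact p.Prime]
    (hG : Fintype.card G = p) (k m : ℕ) (hk : 1 ≤ k) (hm : 1 ≤ m)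
    (g a α : Fin k → Fin m → G) (β β' : ZMod p) (hββ' : β ≠ β')
    (βi βi' : Fin k → ZMod p) (γ γ' : Fin k → Fin m → ZMod p)
    (hsum : ∑ i, βi i = β) (hsum' : ∑ i, βi' i = β')
    (h1 : ∀ i j, (g i j) ^ (γ i j).val = α i j * (a i j) ^ (βi i).val)
    (h2 : ∀ i j, (g i j) ^ (γ' i j).val = α i j * (a i j) ^ (βi' i).val) :
    ∃ i, βi i ≠ βi' i ∧
      ∀ j, a i j = (g i j) ^ ((γ i j - γ' i j) * (βi i - βi' i)⁻¹).val := by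
  have hp : ∀ u : G, u ^ p = 1 := fun u => by rw [← hG]; exact pow_card_eq_one
  have hadd : ∀ (u : G) (x y : ZMod p), u ^ (x + y).val = u ^ x.val * u ^ y.val := by
    intro u x y
    rw [ZMod.val_add, ← pow_eq_pow_mod _ (hp u), pow_add]
  have hmul : ∀ (u : G) (x y : ZMod p), u ^ (x * y).val = (u ^ x.val) ^ y.val := by
    intro u x y
    rw [ZMod.val_mul, ← pow_eq_pow_mod _ (hp u), pow_mul]
  have hex : ∃ i, βi i ≠ βi' i := by
    by_contra hcon
    push Not at hcon
    apply hββ'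
    rw [← hsum, ← hsum']
    exact Finset.sum_congr rfl fun i _ => hcon i
  obtain ⟨i, hi⟩ := hex
  refine ⟨i, hi, fun j => ?_⟩
  have key : (g i j) ^ (γ i j - γ' i j).val = (a i j) ^ (βi i - βi' i).val := by
    have e1 := hadd (g i j) (γ' i j) (γ i j - γ' i j)
    have e2 := hadd (a i j) (βi' i) (βi i - βi' i)
    rw [add_sub_cancel] at e1 e2
    have e := h1 i j
    rw [e1, e2, ← mul_assoc, ← h2 i j] at e
    exact mul_left_cancel e
  rw [hmul, key, ← hmul, mul_inv_cancel₀ (sub_ne_zero.mpr hi), ZMod.val_one, pow_one]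
end

section
/- (Perfect hiding of the bit commitment.) Let G be a finite group of prime order p and let f ∈ G with f ≠ 1. Then the pushforward under r ↦ f^r of the uniform distribution on ZMod p is the uniform distribution on G: PMF.map (fun r => f^r) (PMF.uniformOfFintype (ZMod p)) = PMF.uniformOfFintype G. In particular, the distribution of a commitment f^r with uniformly random r is the same for every non-identity base f, so the commitment reveals nothing about the committed bit. -/
/-- Perfect hiding of the bit commitment: in a group `G` of prime order `p`, for any
non-identity base `f`, the pushforward under `r ↦ f ^ r` of the uniform distribution
on `ZMod p` is the uniform distribution on `G`; in particular the distribution of a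
commitment `f ^ r` with uniformly random `r` is the same for every non-identity
base `f`, so the commitment reveals nothing about the committed bit. -/
theorem commitment_perfect_hiding
    {G : Type} [Group G] [Fintype G] (p : ℕ) [Fact p.Prime]
    (hG : Fintype.card G = p) (f : G) (hf : f ≠ 1) :
    PMF.map (fun r : ZMod p => f ^ r.val) (PMF.uniformOfFintype (ZMod p))
      = PMF.uniformOfFintype G := by
  have hp : p.Prime := Fact.out
  have hord : orderOf f = p :=
    orderOf_eq_prime (by rw [← hG]; exact pow_card_eq_one) hf
  have hinj : Function.Injective (fun r : ZMod p => f ^ r.val) := by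
    intro a b hab
    apply ZMod.val_injective p
    exact pow_injOn_Iio_orderOf (by simpa [hord] using ZMod.val_lt a)
      (by simpa [hord] using ZMod.val_lt b) hab
  have hbij : Function.Bijective (fun r : ZMod p => f ^ r.val) :=
    (Fintype.bijective_iff_injective_and_card _).2 ⟨hinj, by rw [ZMod.card, hG]⟩
  ext y
  obtain ⟨x, rfl⟩ := hbij.2 y
  rw [PMF.map_apply, tsum_eq_single x]
  · simp [hG, ZMod.card]
  · intro b hb
    rw [if_neg]
    intro h
    exact hb (hinj h.symm)
end
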